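/- arXiv:1801.09418 — 7 statements merged into one kernel-verified Lean document; each statement's English description precedes it below -/
import Mathlib

section
/- Let μ ∈ ℝ and let f : ℝ → ℝ be a measurable function such that f(x) ≥ 0 for all x ∈ ℝ and such that for every integrable real-valued random variable X with E(X) ≥ μ one has E(f(X)) ≤ 1. Then f(x) ≤ 1 for all x ∈ ℝ. -/
open MeasureTheory ProbabilityTheory Filter

/-!
Fix a point `x`. For every weight `p < 1` there is a point `y` such that the variable taking the
value `x` with probability `p` and `y` otherwise has the prescribed mean. As `p → 1` the point `y`
may escape to infinity, but `f` is bounded below, so the second term of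
`E(f(X)) = p f(x) + (1 - p) f(y)` is at least a constant times `1 - p`, and the bound on `E(f(X))`
passes to `f(x)` in the limit.
-/

open Set
open scoped Topology

lemma exists_smul_add_one_sub_smul_eq {𝕜 E : Type*} [DivisionRing 𝕜] [AddCommGroup E] [Module 𝕜 E]
    {p : 𝕜} (hp : p ≠ 1) (x m : E) : ∃ y, p • x + (1 - p) • y = m :=
  ⟨(1 - p)⁻¹ • (m - p • x), by
    rw [smul_inv_smul₀ (sub_ne_zero.2 hp.symm), add_sub_cancel]⟩

section OrderedField

variable {𝕜 : Type*} [Field 𝕜] [LinearOrder 𝕜] [IsStrictOrderedRing 𝕜] [TopologicalSpace 𝕜]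
  [OrderTopology 𝕜]

lemma le_of_forall_mul_add_one_sub_mul_le {a b C : 𝕜}
    (h : ∀ p ∈ Ioo (0 : 𝕜) 1, p * a + (1 - p) * b ≤ C) : a ≤ C := by
  have tendsto_left : Tendsto (fun p : 𝕜 ↦ p * a + (1 - p) * b) (𝓝[<] 1) (𝓝 a) := by
    have continuous_combo : Continuous fun p : 𝕜 ↦ p * a + (1 - p) * b := by fun_prop
    simpa using (continuous_combo.tendsto 1).mono_left nhdsWithin_le_nhds
  exact le_of_tendsto tendsto_left
    (eventually_of_mem (Ioo_mem_nhdsLT zero_lt_one) h)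

lemma le_of_forall_smul_add_one_sub_smul_eq {E : Type*} [AddCommGroup E] [Module 𝕜 E]
    {f : E → 𝕜} (hf : BddBelow (range f)) {m x : E} {C : 𝕜}
    (h : ∀ p ∈ Ioo (0 : 𝕜) 1, ∀ y, p • x + (1 - p) • y = m → p * f x + (1 - p) * f y ≤ C) :
    f x ≤ C := by
  obtain ⟨b, hb⟩ := hf
  refine le_of_forall_mul_add_one_sub_mul_le (b := b) fun p hp ↦ ?_
  obtain ⟨y, hy⟩ := exists_smul_add_one_sub_smul_eq hp.2.ne x m
  have one_sub_nonneg : 0 ≤ 1 - p := sub_nonneg.2 hp.2.le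
  calc p * f x + (1 - p) * b
    _ ≤ p * f x + (1 - p) * f y := by gcongr; exact hb (mem_range_self y)
    _ ≤ C := h p hp y hy

end OrderedField

theorem stmt4_general {E : Type*} [NormedAddCommGroup E] [NormedSpace ℝ E] [CompleteSpace E]
    (m : E) (C : ℝ) (f : E → ℝ) (hf : BddBelow (range f))
    (h : ∀ (Ω : Type) (_ : MeasurableSpace Ω) (P : Measure Ω), IsProbabilityMeasure P →
      ∀ X : Ω → E, Integrable X P → ∫ ω, X ω ∂P = m → ∫ ω, f (X ω) ∂P ≤ C) :
    ∀ x, f x ≤ C := by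
  intro x
  refine le_of_forall_smul_add_one_sub_smul_eq hf (m := m) fun p hp y hy ↦ ?_
  let q : unitInterval := ⟨p, Ioo_subset_Icc_self hp⟩
  let X : Bool → E := fun b ↦ bif b then x else y
  have integral_X : ∫ b, X b ∂Ber(true, false, q) = m :=
    (integral_bernoulliMeasure true false q X).trans hy
  calc p * f x + (1 - p) * f y
    _ = ∫ b, f (X b) ∂Ber(true, false, q) :=
      (integral_bernoulliMeasure true false q fun b ↦ f (X b)).symm
    _ ≤ C := h Bool inferInstance _ inferInstance X
      (integrable_bernoulliMeasure true false q X) integral_X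

/-- if `f ≥ 0` is measurable and `E(f(X)) ≤ 1` for every integrable random
variable `X` (on any probability space) with `E(X) ≥ μ`, then `f ≤ 1` everywhere. -/
theorem stmt4 (μ : ℝ) (f : ℝ → ℝ) (hfmeas : Measurable f) (hfnn : ∀ x, 0 ≤ f x)
    (h : ∀ (Ω : Type) (_ : MeasurableSpace Ω) (P : Measure Ω), IsProbabilityMeasure P →
      ∀ X : Ω → ℝ, Integrable X P → μ ≤ ∫ ω, X ω ∂P → ∫ ω, f (X ω) ∂P ≤ 1) :
    ∀ x, f x ≤ 1 := by
  exact stmt4_general μ 1 f ⟨0, forall_mem_range.2 hfnn⟩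
    fun Ω _ P hP X hX hmean ↦ h Ω _ P hP X hX hmean.ge
end

section
/- Let T be an integrable random variable with T ≤ τ almost surely and μ < τ, and define λ(c) = E[log(1 − c·(T − μ)/(τ − μ))] for 0 ≤ c < 1. Then λ(c) is finite for every c ∈ [0,1), λ(0) = 0, λ is concave on (0,1) and continuous on [0,1), and if moreover P{T = μ} < 1 then λ is strictly concave on (0,1). -/
/-!
Put `X = (T - μ) / (τ - μ)`, so that `X ≤ 1` almost surely and `λ(c) = E[log (1 - c * X)]`.
For fixed `x ≤ 1`, the map `c ↦ log (1 - c * x)` is concave on `[0, 1)`, strictly so when `x ≠ 0`,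
and concavity passes to the integral, strictly so when `X ≠ 0` with positive probability.
Integrability and continuity both follow from `|log (1 - c * x)| ≤ -log (1 - c) * |x|`, which is
Bernoulli's inequality `(1 - c) ^ x ≤ 1 - c * x` when `0 ≤ x ≤ 1`.
-/

open MeasureTheory ProbabilityTheory Filter

section StrictConcave

variable {𝕜 E F β : Type*} [Ring 𝕜] [PartialOrder 𝕜] [AddCommGroup E] [AddCommGroup F]
  [Module 𝕜 E] [Module 𝕜 F] [AddCommMonoid β] [PartialOrder β] [SMul 𝕜 β]

theorem strictConcaveOn_comp_affineMap {f : F → β} {s : Set F} (hf : StrictConcaveOn 𝕜 s f)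
    {g : E →ᵃ[𝕜] F} (hg : Function.Injective g) : StrictConcaveOn 𝕜 (g ⁻¹' s) (f ∘ g) := by
  refine ⟨hf.1.affine_preimage g, fun x hx y hy hxy a b ha hb hab => ?_⟩
  simp only [Function.comp_apply, Convex.combo_affine_apply hab]
  exact hf.2 hx hy (hg.ne hxy) ha hb hab

end StrictConcave

section Integral

variable {Ω : Type*} [MeasurableSpace Ω] {P : Measure Ω}

theorem integral_lt_integral_of_ae_le_of_frequently_lt {f g : Ω → ℝ} (hf : Integrable f P)
    (hg : Integrable g P) (hle : f ≤ᵐ[P] g) (hlt : ∃ᵐ ω ∂P, f ω < g ω) :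
    ∫ ω, f ω ∂P < ∫ ω, g ω ∂P := by
  refine (integral_mono_ae hf hg hle).lt_of_ne fun heq => hlt ?_
  filter_upwards [(integral_eq_iff_of_ae_le hf hg hle).1 heq] with ω hω
  exact hω.not_lt

variable {E : Type*} [AddCommMonoid E] [SMul ℝ E] {s : Set E} {F : E → Ω → ℝ}

theorem concaveOn_integral (hs : Convex ℝ s) (hint : ∀ x ∈ s, Integrable (F x) P)
    (hF : ∀ᵐ ω ∂P, ConcaveOn ℝ s fun x => F x ω) :
    ConcaveOn ℝ s fun x => ∫ ω, F x ω ∂P := by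
  refine ⟨hs, fun x hx y hy a b ha hb hab => ?_⟩
  have hax : Integrable (fun ω => a • F x ω) P := (hint x hx).smul a
  have hby : Integrable (fun ω => b • F y ω) P := (hint y hy).smul b
  rw [← integral_smul, ← integral_smul, ← integral_add hax hby]
  refine integral_mono_ae (hax.add hby) (hint _ (hs hx hy ha hb hab)) ?_
  filter_upwards [hF] with ω hω
  exact hω.2 hx hy ha hb hab

theorem strictConcaveOn_integral (hs : Convex ℝ s) (hint : ∀ x ∈ s, Integrable (F x) P)
    (hF : ∀ᵐ ω ∂P, ConcaveOn ℝ s fun x => F x ω)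
    (hF' : ∃ᵐ ω ∂P, StrictConcaveOn ℝ s fun x => F x ω) :
    StrictConcaveOn ℝ s fun x => ∫ ω, F x ω ∂P := by
  refine ⟨hs, fun x hx y hy hxy a b ha hb hab => ?_⟩
  have hax : Integrable (fun ω => a • F x ω) P := (hint x hx).smul a
  have hby : Integrable (fun ω => b • F y ω) P := (hint y hy).smul b
  rw [← integral_smul, ← integral_smul, ← integral_add hax hby]
  refine integral_lt_integral_of_ae_le_of_frequently_lt (hax.add hby)
    (hint _ (hs hx hy ha.le hb.le hab)) ?_ (hF'.mono fun ω hω => hω.2 hx hy hxy ha hb hab)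
  filter_upwards [hF] with ω hω
  exact hω.2 hx hy ha.le hb.le hab

end Integral

section LogOneSubMul

variable {c x : ℝ}

theorem one_sub_mul_pos (hc : c ∈ Set.Ico (0 : ℝ) 1) (hx : x ≤ 1) : 0 < 1 - c * x :=
  sub_pos.2 ((mul_le_of_le_one_right hc.1 hx).trans_lt hc.2)

theorem mul_log_one_sub_le_log_one_sub_mul (hc : c < 1) (hx0 : 0 ≤ x) (hx1 : x ≤ 1) :
    x * Real.log (1 - c) ≤ Real.log (1 - c * x) := by
  have hc' : 0 < 1 - c := sub_pos.2 hc
  have bernoulli : (1 - c) ^ x ≤ 1 - c * x := by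
    simpa only [← sub_eq_add_neg, mul_neg, mul_comm x c] using
      rpow_one_add_le_one_add_mul_self (neg_le_neg hc.le) hx0 hx1
  rw [← Real.log_rpow hc']
  exact Real.log_le_log (Real.rpow_pos_of_pos hc' x) bernoulli

theorem abs_log_one_sub_mul_le (hc : c ∈ Set.Ico (0 : ℝ) 1) (hx : x ≤ 1) :
    |Real.log (1 - c * x)| ≤ -Real.log (1 - c) * |x| := by
  have hpos : 0 < 1 - c * x := one_sub_mul_pos hc hx
  rcases le_total 0 x with hx0 | hx0
  · have hle : 1 - c * x ≤ 1 := sub_le_self 1 (mul_nonneg hc.1 hx0)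
    rw [abs_of_nonpos (Real.log_nonpos hpos.le hle), abs_of_nonneg hx0]
    linarith [mul_log_one_sub_le_log_one_sub_mul hc.2 hx0 hx]
  · have hge : 1 ≤ 1 - c * x := le_sub_self_iff 1 |>.2 (mul_nonpos_of_nonneg_of_nonpos hc.1 hx0)
    have hlog : c ≤ -Real.log (1 - c) := by
      linarith [Real.log_le_sub_one_of_pos (sub_pos.2 hc.2)]
    rw [abs_of_nonneg (Real.log_nonneg hge), abs_of_nonpos hx0]
    calc Real.log (1 - c * x) ≤ c * -x := by linarith [Real.log_le_sub_one_of_pos hpos]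
      _ ≤ -Real.log (1 - c) * -x := mul_le_mul_of_nonneg_right hlog (neg_nonneg.2 hx0)

theorem lineMap_one_one_sub (c x : ℝ) : AffineMap.lineMap 1 (1 - x) c = 1 - c * x := by
  rw [AffineMap.lineMap_apply_ring']
  ring

theorem concaveOn_log_one_sub_mul (hx : x ≤ 1) :
    ConcaveOn ℝ (Set.Ico 0 1) fun c => Real.log (1 - c * x) := by
  simp only [← lineMap_one_one_sub]
  refine (strictConcaveOn_log_Ioi.concaveOn.comp_affineMap _).subset (fun c hc => ?_)
    (convex_Ico 0 1)
  rw [Set.mem_preimage, lineMap_one_one_sub]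
  exact one_sub_mul_pos hc hx

theorem strictConcaveOn_log_one_sub_mul (hx : x ≤ 1) (hx0 : x ≠ 0) :
    StrictConcaveOn ℝ (Set.Ico 0 1) fun c => Real.log (1 - c * x) := by
  have hinj : Function.Injective (AffineMap.lineMap (k := ℝ) 1 (1 - x)) :=
    AffineMap.lineMap_injective ℝ fun h => hx0 (by linarith)
  simp only [← lineMap_one_one_sub]
  refine (strictConcaveOn_comp_affineMap strictConcaveOn_log_Ioi hinj).subset (fun c hc => ?_)
    (convex_Ico 0 1)
  rw [Set.mem_preimage, lineMap_one_one_sub]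
  exact one_sub_mul_pos hc hx

end LogOneSubMul

section Expectation

variable {Ω : Type*} [MeasurableSpace Ω] {P : Measure Ω} {X : Ω → ℝ}

theorem aestronglyMeasurable_log_one_sub_mul (hX : AEMeasurable X P) (c : ℝ) :
    AEStronglyMeasurable (fun ω => Real.log (1 - c * X ω)) P :=
  (Real.measurable_log.comp_aemeasurable ((hX.const_mul c).const_sub 1)).aestronglyMeasurable

theorem integrable_log_one_sub_mul (hX : Integrable X P) (hX1 : ∀ᵐ ω ∂P, X ω ≤ 1) {c : ℝ}
    (hc : c ∈ Set.Ico (0 : ℝ) 1) : Integrable (fun ω => Real.log (1 - c * X ω)) P := by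
  refine (hX.abs.const_mul (-Real.log (1 - c))).mono'
    (aestronglyMeasurable_log_one_sub_mul hX.aemeasurable c) ?_
  filter_upwards [hX1] with ω hω
  exact abs_log_one_sub_mul_le hc hω

theorem continuousOn_integral_log_one_sub_mul (hX : Integrable X P) (hX1 : ∀ᵐ ω ∂P, X ω ≤ 1) :
    ContinuousOn (fun c => ∫ ω, Real.log (1 - c * X ω) ∂P) (Set.Ico 0 1) := by
  intro c hc
  obtain ⟨d, hcd, hd⟩ := exists_between hc.2
  refine continuousWithinAt_of_dominated (bound := fun ω => -Real.log (1 - d) * |X ω|)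
    (.of_forall (aestronglyMeasurable_log_one_sub_mul hX.aemeasurable)) ?_
    (hX.abs.const_mul _) ?_
  · filter_upwards [self_mem_nhdsWithin, mem_nhdsWithin_of_mem_nhds (Iio_mem_nhds hcd)]
      with e he hed
    have hlog : Real.log (1 - d) ≤ Real.log (1 - e) :=
      Real.log_le_log (sub_pos.2 hd) (sub_le_sub_left (le_of_lt hed) 1)
    filter_upwards [hX1] with ω hω
    exact (abs_log_one_sub_mul_le he hω).trans
      (mul_le_mul_of_nonneg_right (neg_le_neg hlog) (abs_nonneg _))
  · filter_upwards [hX1] with ω hω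
    have hcont : ContinuousAt (fun c => 1 - c * X ω) c := by fun_prop
    exact (hcont.log (one_sub_mul_pos hc hω).ne').continuousWithinAt

theorem concaveOn_integral_log_one_sub_mul (hX : Integrable X P) (hX1 : ∀ᵐ ω ∂P, X ω ≤ 1) :
    ConcaveOn ℝ (Set.Ico 0 1) fun c => ∫ ω, Real.log (1 - c * X ω) ∂P :=
  concaveOn_integral (convex_Ico 0 1) (fun _ => integrable_log_one_sub_mul hX hX1)
    (hX1.mono fun _ => concaveOn_log_one_sub_mul)

theorem strictConcaveOn_integral_log_one_sub_mul (hX : Integrable X P)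
    (hX1 : ∀ᵐ ω ∂P, X ω ≤ 1) (hX0 : ∃ᵐ ω ∂P, X ω ≠ 0) :
    StrictConcaveOn ℝ (Set.Ico 0 1) fun c => ∫ ω, Real.log (1 - c * X ω) ∂P :=
  strictConcaveOn_integral (convex_Ico 0 1) (fun _ => integrable_log_one_sub_mul hX hX1)
    (hX1.mono fun _ => concaveOn_log_one_sub_mul)
    ((hX0.and_eventually hX1).mono fun _ hω => strictConcaveOn_log_one_sub_mul hω.2 hω.1)

end Expectation

theorem stmt6_general {Ω : Type*} [MeasurableSpace Ω] (P : Measure Ω) (τ μ : ℝ) (hμτ : μ < τ)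
    (T : Ω → ℝ) (hT : Integrable (fun ω => T ω - μ) P) (hTbd : ∀ᵐ ω ∂P, T ω ≤ τ)
    (lam : ℝ → ℝ)
    (hlam : ∀ c, lam c = ∫ ω, Real.log (1 - c * (T ω - μ) / (τ - μ)) ∂P) :
    (∀ c ∈ Set.Ico (0 : ℝ) 1,
        Integrable (fun ω => Real.log (1 - c * (T ω - μ) / (τ - μ))) P) ∧
      lam 0 = 0 ∧
      ConcaveOn ℝ (Set.Ico 0 1) lam ∧
      ContinuousOn lam (Set.Ico 0 1) ∧
      ((∃ᵐ ω ∂P, T ω ≠ μ) → StrictConcaveOn ℝ (Set.Ico 0 1) lam) := by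
  obtain rfl : lam = fun c => ∫ ω, Real.log (1 - c * (T ω - μ) / (τ - μ)) ∂P := funext hlam
  have hd : 0 < τ - μ := sub_pos.2 hμτ
  have hX : Integrable (fun ω => (T ω - μ) / (τ - μ)) P := hT.div_const _
  have hX1 : ∀ᵐ ω ∂P, (T ω - μ) / (τ - μ) ≤ 1 :=
    hTbd.mono fun ω hω => (div_le_one hd).2 (sub_le_sub_right hω μ)
  simp only [mul_div_assoc]
  exact ⟨fun _ => integrable_log_one_sub_mul hX hX1, by simp,
    concaveOn_integral_log_one_sub_mul hX hX1, continuousOn_integral_log_one_sub_mul hX hX1,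
    fun hne => strictConcaveOn_integral_log_one_sub_mul hX hX1 <|
      hne.mono fun _ hω => div_ne_zero (sub_ne_zero.2 hω) hd.ne'⟩

/-- Lemma 3: properties of `λ(c) = E[log(1 − c·(T − μ)/(τ − μ))]` for
`T ≤ τ` a.s. integrable and `μ < τ`: the defining integrand is integrable for each
`c ∈ [0,1)`, `λ(0) = 0`, `λ` is concave on `(0,1)` and continuous on `[0,1)`, and it is
strictly concave on `(0,1)` whenever `P{T = μ} < 1`. -/
theorem stmt6 {Ω : Type*} [MeasurableSpace Ω] (P : Measure Ω) [IsProbabilityMeasure P]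
    (τ μ : ℝ) (hμτ : μ < τ)
    (T : Ω → ℝ) (hTmeas : Measurable T) (hTint : Integrable T P)
    (hTbd : ∀ᵐ ω ∂P, T ω ≤ τ)
    (lam : ℝ → ℝ)
    (hlam : ∀ c, lam c = ∫ ω, Real.log (1 - c * (T ω - μ) / (τ - μ)) ∂P) :
    (∀ c ∈ Set.Ico (0 : ℝ) 1,
        Integrable (fun ω => Real.log (1 - c * (T ω - μ) / (τ - μ))) P) ∧
      lam 0 = 0 ∧
      ConcaveOn ℝ (Set.Ioo 0 1) lam ∧
      ContinuousOn lam (Set.Ico 0 1) ∧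
      (P {ω | T ω = μ} < 1 → StrictConcaveOn ℝ (Set.Ioo 0 1) lam) := by
  obtain ⟨hint, hzero, hconc, hcont, hstrict⟩ :=
    stmt6_general P τ μ hμτ T (hTint.sub (integrable_const μ)) hTbd lam hlam
  have hne (hP : P {ω | T ω = μ} < 1) : ∃ᵐ ω ∂P, T ω ≠ μ := fun hT => hP.ne <|
    (measure_congr (eventuallyEq_univ.2 (hT.mono fun _ => not_not.1))).trans measure_univ
  exact ⟨hint, hzero, hconc.subset Set.Ioo_subset_Ico_self (convex_Ioo 0 1), hcont,
    fun hP => (hstrict (hne hP)).subset Set.Ioo_subset_Ico_self (convex_Ioo 0 1)⟩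
end

section
/- Let τ0 ≤ T ≤ τ1 almost surely with τ0 < ν < μ < τ1 and E(T) = ν, and set λ(c) = E[log(1 − c·(T − μ)/(τ1 − μ))], p = (ν − τ0)/(τ1 − τ0), q = (μ − τ0)/(τ1 − τ0). Then λ((μ − ν)/(μ − τ0)) ≥ p·log(p/q) + (1 − p)·log((1 − p)/(1 − q)) > 0; that is, λ evaluated at (μ − ν)/(μ − τ0) is at least the Kullback–Leibler divergence D_KL(Alt(p) ∥ Alt(q)), which is strictly positive. -/
open MeasureTheory ProbabilityTheory Filter

/-!
With `w = (T - τ0) / (τ1 - τ0) ∈ [0, 1]`, the argument of the logarithm is affine in `T` and equals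
`w * (p / q) + (1 - w) * ((1 - p) / (1 - q))`, a mixture of the two values of the likelihood ratio
of `Alt(p)` with respect to `Alt(q)`. The logarithm lies above its chord between these values, and
since `w` has mean `p` the expectation of the chord is `D_KL(Alt(p) ∥ Alt(q))`. This divergence is
the `Alt(q)`-mean of `x * log x + 1 - x` over the likelihood ratio, and this function is nonnegative
and vanishes only at `x = 1`.
-/

section IntegralChord

variable {Ω : Type*} [MeasurableSpace Ω] {P : Measure Ω} {W : Ω → ℝ}

theorem integral_mul_add_one_sub_mul_le_integral_of_concaveOn [IsProbabilityMeasure P]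
    {E : Type*} [AddCommMonoid E] [SMul ℝ E] {s : Set E} {φ : E → ℝ} (hφ : ConcaveOn ℝ s φ)
    {x y : E} (hx : x ∈ s) (hy : y ∈ s) (hW : Integrable W P)
    (hW01 : ∀ᵐ ω ∂P, W ω ∈ Set.Icc 0 1)
    (hφW : Integrable (fun ω ↦ φ (W ω • x + (1 - W ω) • y)) P) :
    (∫ ω, W ω ∂P) * φ x + (1 - ∫ ω, W ω ∂P) * φ y ≤ ∫ ω, φ (W ω • x + (1 - W ω) • y) ∂P := by
  have hW' : Integrable (fun ω ↦ 1 - W ω) P := (integrable_const 1).sub hW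
  calc (∫ ω, W ω ∂P) * φ x + (1 - ∫ ω, W ω ∂P) * φ y
    _ = ∫ ω, (W ω * φ x + (1 - W ω) * φ y) ∂P := by
      rw [integral_add (hW.mul_const _) (hW'.mul_const _), integral_mul_const, integral_mul_const,
        integral_sub (integrable_const 1) hW, integral_const, probReal_univ, one_smul]
    _ ≤ ∫ ω, φ (W ω • x + (1 - W ω) • y) ∂P := by
      refine integral_mono_ae ((hW.mul_const _).add (hW'.mul_const _)) hφW ?_
      filter_upwards [hW01] with ω hω
      exact hφ.2 hx hy hω.1 (sub_nonneg.2 hω.2) (add_sub_cancel _ _)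

theorem integrable_log_of_mem_Icc [IsFiniteMeasure P] {X : Ω → ℝ} {a b : ℝ} (ha : 0 < a)
    (hX : AEMeasurable X P) (hXab : ∀ᵐ ω ∂P, X ω ∈ Set.Icc a b) :
    Integrable (fun ω ↦ Real.log (X ω)) P := by
  refine .of_mem_Icc (Real.log a) (Real.log b) hX.log ?_
  filter_upwards [hXab] with ω ⟨haX, hXb⟩
  exact ⟨Real.log_le_log ha haX, Real.log_le_log (ha.trans_le haX) hXb⟩

theorem integral_mul_log_add_le_integral_log [IsProbabilityMeasure P] {a b : ℝ} (ha : 0 < a)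
    (hb : 0 < b) (hW : Integrable W P) (hW01 : ∀ᵐ ω ∂P, W ω ∈ Set.Icc 0 1) :
    (∫ ω, W ω ∂P) * Real.log a + (1 - ∫ ω, W ω ∂P) * Real.log b ≤
      ∫ ω, Real.log (W ω * a + (1 - W ω) * b) ∂P := by
  have h_mix : ∀ᵐ ω ∂P, W ω * a + (1 - W ω) * b ∈ Set.uIcc a b := by
    filter_upwards [hW01] with ω hω
    exact convex_uIcc a b Set.left_mem_uIcc Set.right_mem_uIcc hω.1 (sub_nonneg.2 hω.2)
      (add_sub_cancel _ _)
  have h_meas : AEMeasurable (fun ω ↦ W ω * a + (1 - W ω) * b) P :=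
    (hW.aemeasurable.mul_const a).add ((hW.aemeasurable.const_sub 1).mul_const b)
  exact integral_mul_add_one_sub_mul_le_integral_of_concaveOn
    strictConcaveOn_log_Ioi.concaveOn ha hb hW hW01
    (integrable_log_of_mem_Icc (lt_min ha hb) h_meas h_mix)

end IntegralChord

/-- The Kullback–Leibler divergence `D_KL(Alt(p) ∥ Alt(q))` of the Bernoulli distributions with
success probabilities `p` and `q`, as a closed formula. It is meant for `0 ≤ p ≤ 1` and
`0 < q < 1`; for `p = 0` or `p = 1` the convention `0 * log 0 = 0` is built in. -/
noncomputable def bernoulliKL (p q : ℝ) : ℝ :=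
  p * Real.log (p / q) + (1 - p) * Real.log ((1 - p) / (1 - q))

section BernoulliKL

open InformationTheory

variable {p q : ℝ}

theorem bernoulliKL_eq_klFun (hq0 : q ≠ 0) (hq1 : q ≠ 1) :
    bernoulliKL p q = q * klFun (p / q) + (1 - q) * klFun ((1 - p) / (1 - q)) := by
  have hq1' : 1 - q ≠ 0 := sub_ne_zero.2 hq1.symm
  simp only [bernoulliKL, klFun]
  field_simp
  ring

theorem bernoulliKL_pos (hp : p ∈ Set.Icc 0 1) (hq : q ∈ Set.Ioo 0 1) (hpq : p ≠ q) :
    0 < bernoulliKL p q := by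
  have hq1 : 0 < 1 - q := sub_pos.2 hq.2
  have hr : 0 ≤ p / q := div_nonneg hp.1 hq.1.le
  have hr_ne : p / q ≠ 1 := (div_eq_one_iff_eq hq.1.ne').not.2 hpq
  have h_success : 0 < klFun (p / q) :=
    (klFun_nonneg hr).lt_of_ne' ((klFun_eq_zero_iff hr).not.2 hr_ne)
  have h_failure : 0 ≤ klFun ((1 - p) / (1 - q)) :=
    klFun_nonneg (div_nonneg (sub_nonneg.2 hp.2) hq1.le)
  rw [bernoulliKL_eq_klFun hq.1.ne' hq.2.ne]
  exact add_pos_of_pos_of_nonneg (mul_pos hq.1 h_success) (mul_nonneg hq1.le h_failure)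

end BernoulliKL

section AffineRescaling

variable {𝕜 : Type*} [Field 𝕜] {a b t : 𝕜}

section Order

variable [LinearOrder 𝕜] [IsStrictOrderedRing 𝕜]

theorem sub_div_sub_mem_Ioo (ht : t ∈ Set.Ioo a b) : (t - a) / (b - a) ∈ Set.Ioo 0 1 := by
  have hab : 0 < b - a := sub_pos.2 (ht.1.trans ht.2)
  exact ⟨div_pos (sub_pos.2 ht.1) hab, (div_lt_one hab).2 (sub_lt_sub_right ht.2 a)⟩

theorem sub_div_sub_mem_Icc (ht : t ∈ Set.Icc a b) : (t - a) / (b - a) ∈ Set.Icc 0 1 := by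
  have hab : 0 ≤ b - a := sub_nonneg.2 (ht.1.trans ht.2)
  exact ⟨div_nonneg (sub_nonneg.2 ht.1) hab, div_le_one_of_le₀ (sub_le_sub_right ht.2 a) hab⟩

end Order

theorem one_sub_mul_div_eq_mix {ν μ : 𝕜} (haμ : a ≠ μ) (hμb : μ ≠ b) (hab : a ≠ b) :
    1 - (μ - ν) / (μ - a) * (t - μ) / (b - μ) =
      (t - a) / (b - a) * ((ν - a) / (b - a) / ((μ - a) / (b - a))) +
        (1 - (t - a) / (b - a)) *
          ((1 - (ν - a) / (b - a)) / (1 - (μ - a) / (b - a))) := by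
  have h1 : μ - a ≠ 0 := sub_ne_zero.2 haμ.symm
  have h2 : b - μ ≠ 0 := sub_ne_zero.2 hμb.symm
  have h3 : b - a ≠ 0 := sub_ne_zero.2 hab.symm
  have h_compl (s : 𝕜) : 1 - (s - a) / (b - a) = (b - s) / (b - a) := by
    field_simp
    ring
  simp only [h_compl, div_div_div_cancel_right₀ h3]
  field_simp
  ring

end AffineRescaling

theorem stmt10_general {Ω : Type*} [MeasurableSpace Ω] (P : Measure Ω) [IsProbabilityMeasure P]
    {τ0 τ1 ν μ : ℝ} (hν : ν ∈ Set.Ioo τ0 τ1) (hμ : μ ∈ Set.Ioo τ0 τ1) (hνμ : ν ≠ μ)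
    {T : Ω → ℝ} (hTint : Integrable T P) (hTbd : ∀ᵐ ω ∂P, T ω ∈ Set.Icc τ0 τ1)
    (hTmean : ∫ ω, T ω ∂P = ν)
    {p q : ℝ} (hp : p = (ν - τ0) / (τ1 - τ0)) (hq : q = (μ - τ0) / (τ1 - τ0)) :
    0 < bernoulliKL p q ∧
      bernoulliKL p q ≤ ∫ ω, Real.log (1 - (μ - ν) / (μ - τ0) * (T ω - μ) / (τ1 - μ)) ∂P := by
  have hp01 : p ∈ Set.Ioo 0 1 := hp ▸ sub_div_sub_mem_Ioo hν
  have hq01 : q ∈ Set.Ioo 0 1 := hq ▸ sub_div_sub_mem_Ioo hμ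
  have hτ : τ0 < τ1 := hν.1.trans hν.2
  have hpq : p ≠ q := by
    rw [hp, hq]
    exact fun h ↦ hνμ (sub_left_injective ((div_left_inj' (sub_pos.2 hτ).ne').1 h))
  refine ⟨bernoulliKL_pos (Set.Ioo_subset_Icc_self hp01) hq01 hpq, ?_⟩
  set W : Ω → ℝ := fun ω ↦ (T ω - τ0) / (τ1 - τ0)
  have hW : Integrable W P := (hTint.sub (integrable_const τ0)).div_const _
  have hW01 : ∀ᵐ ω ∂P, W ω ∈ Set.Icc 0 1 := hTbd.mono fun _ ↦ sub_div_sub_mem_Icc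
  have hWmean : ∫ ω, W ω ∂P = p := by
    rw [integral_div, integral_sub hTint (integrable_const τ0), hTmean, hp, integral_const,
      probReal_univ, one_smul]
  have h_chord := integral_mul_log_add_le_integral_log (div_pos hp01.1 hq01.1)
    (div_pos (sub_pos.2 hp01.2) (sub_pos.2 hq01.2)) hW hW01
  simpa only [bernoulliKL, hWmean, W, one_sub_mul_div_eq_mix hμ.1.ne hμ.2.ne hτ.ne, ← hp, ← hq]
    using h_chord

/-- part of Lemma 4: if `τ0 ≤ T ≤ τ1` a.s., `τ0 < ν < μ < τ1` and
`E(T) = ν`, then `λ((μ − ν)/(μ − τ0))` is at least the Kullback–Leibler divergence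
`D_KL(Alt(p) ∥ Alt(q)) = p·log(p/q) + (1 − p)·log((1 − p)/(1 − q))` with
`p = (ν − τ0)/(τ1 − τ0)` and `q = (μ − τ0)/(τ1 − τ0)`, which is strictly positive. -/
theorem stmt10 {Ω : Type*} [MeasurableSpace Ω] (P : Measure Ω) [IsProbabilityMeasure P]
    (τ0 τ1 ν μ : ℝ) (h0ν : τ0 < ν) (hνμ : ν < μ) (hμ1 : μ < τ1)
    (T : Ω → ℝ) (hTint : Integrable T P) (hTbd : ∀ᵐ ω ∂P, T ω ∈ Set.Icc τ0 τ1)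
    (hTmean : ∫ ω, T ω ∂P = ν)
    (p q : ℝ) (hp : p = (ν - τ0) / (τ1 - τ0)) (hq : q = (μ - τ0) / (τ1 - τ0)) :
    0 < p * Real.log (p / q) + (1 - p) * Real.log ((1 - p) / (1 - q)) ∧
      p * Real.log (p / q) + (1 - p) * Real.log ((1 - p) / (1 - q)) ≤
        ∫ ω, Real.log (1 - (μ - ν) / (μ - τ0) * (T ω - μ) / (τ1 - μ)) ∂P :=
  stmt10_general P ⟨h0ν, hνμ.trans hμ1⟩ ⟨h0ν.trans hνμ, hμ1⟩ hνμ.ne hTint hTbd hTmean hp hq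
end

section
/- Let τ0 ≤ T ≤ τ1 almost surely with τ0 < μ < τ1, and suppose P{T = τ1} > 0. Then λ(c) = E[log(1 − c·(T − μ)/(τ1 − μ))] satisfies lim_{c↑1} λ(c) = −∞; indeed λ(c) ≤ P{T = τ1}·log(1 − c) + log(1 − (τ0 − μ)/(τ1 − μ)) for 0 ≤ c < 1. -/
open MeasureTheory ProbabilityTheory Filter

/-!
Write `X = (T - μ) / (τ1 - μ) ≤ 1`. On the event `X = 1` the integrand `log (1 - c * X)` equals
`log (1 - c)`, and off it the integrand is at most `log⁺ (1 - X)`, uniformly in `c ∈ [0, 1)`.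
Integrating gives `λ(c) ≤ P{X = 1} * log (1 - c) + E[log⁺ (1 - X)]`, whose first term tends to `-∞`
as `c ↑ 1`. When `T ≥ τ0`, the last term is at most `log (1 - (τ0 - μ) / (τ1 - μ))`.
-/

open Real Topology

section PosLog

variable {a b c x μ : ℝ}

lemma log_one_sub_mul_mem_Icc (hc0 : 0 ≤ c) (hc1 : c < 1) (hx : x ≤ 1) :
    log (1 - c * x) ∈ Set.Icc (log (1 - c)) (log⁺ (1 - x)) := by
  have hlower : 1 - c ≤ 1 - c * x := by nlinarith
  have hupper : 1 - c * x ≤ max 1 (1 - x) := by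
    rcases le_total 0 x with h | h
    · exact le_max_of_le_left (by nlinarith)
    · exact le_max_of_le_right (by nlinarith)
  rw [posLog_eq_log_max_one (sub_nonneg.2 hx)]
  exact ⟨log_le_log (by linarith) hlower, log_le_log (by linarith) hupper⟩

lemma posLog_one_sub_div_le_log (haμ : a ≤ μ) (hμb : μ < b) (hx : x ∈ Set.Icc a b) :
    log⁺ (1 - (x - μ) / (b - μ)) ≤ log (1 - (a - μ) / (b - μ)) := by
  have hd : 0 < b - μ := sub_pos.2 hμb
  have hnonneg : 0 ≤ 1 - (x - μ) / (b - μ) :=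
    sub_nonneg.2 ((div_le_one hd).2 (sub_le_sub_right hx.2 μ))
  have hle : 1 - (x - μ) / (b - μ) ≤ 1 - (a - μ) / (b - μ) := by
    gcongr
    exact hx.1
  have hone : 1 ≤ 1 - (a - μ) / (b - μ) :=
    (le_sub_self_iff 1).2 (div_nonpos_of_nonpos_of_nonneg (sub_nonpos.2 haμ) hd.le)
  rw [posLog_eq_log_max_one hnonneg]
  exact log_le_log (by positivity) (max_le hone hle)

lemma tendsto_log_one_sub_nhdsLT_one : Tendsto (fun c ↦ log (1 - c)) (𝓝[<] 1) atBot := by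
  have hsub : Tendsto (fun c : ℝ ↦ 1 - c) (𝓝 1) (𝓝 0) := by
    simpa only [id, sub_self] using (tendsto_id (x := 𝓝 (1 : ℝ))).const_sub 1
  refine tendsto_log_nhdsGT_zero.comp (tendsto_nhdsWithin_iff.2 ⟨?_, ?_⟩)
  · exact hsub.mono_left nhdsWithin_le_nhds
  · filter_upwards [self_mem_nhdsWithin] with c hc using sub_pos.2 (Set.mem_Iio.1 hc)

end PosLog

section Expectation

variable {Ω : Type*} [MeasurableSpace Ω] {P : Measure Ω} {X : Ω → ℝ} {a b c μ : ℝ}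

lemma integrable_log_one_sub_mul_s12 [IsFiniteMeasure P] (hX : AEMeasurable X P)
    (hX1 : ∀ᵐ ω ∂P, X ω ≤ 1) (hint : Integrable (fun ω ↦ log⁺ (1 - X ω)) P)
    (hc0 : 0 ≤ c) (hc1 : c < 1) : Integrable (fun ω ↦ log (1 - c * X ω)) P := by
  have hmem : ∀ᵐ ω ∂P, log (1 - c * X ω) ∈ Set.Icc (log (1 - c)) (log⁺ (1 - X ω)) :=
    hX1.mono fun _ ↦ log_one_sub_mul_mem_Icc hc0 hc1
  exact integrable_of_le_of_le ((hX.const_mul c).const_sub 1).log.aestronglyMeasurable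
    (hmem.mono fun _ ↦ And.left) (hmem.mono fun _ ↦ And.right) (integrable_const _) hint

lemma integral_log_one_sub_mul_le [IsFiniteMeasure P] (hX : AEMeasurable X P)
    (hX1 : ∀ᵐ ω ∂P, X ω ≤ 1) (hint : Integrable (fun ω ↦ log⁺ (1 - X ω)) P)
    (hc0 : 0 ≤ c) (hc1 : c < 1) :
    ∫ ω, log (1 - c * X ω) ∂P ≤
      P.real {ω | X ω = 1} * log (1 - c) + ∫ ω, log⁺ (1 - X ω) ∂P := by
  have hlog := integrable_log_one_sub_mul_s12 hX hX1 hint hc0 hc1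
  have hS : NullMeasurableSet {ω | X ω = 1} P :=
    hX.nullMeasurableSet_preimage (measurableSet_singleton 1)
  have hon : ∫ ω in {ω | X ω = 1}, log (1 - c * X ω) ∂P =
      P.real {ω | X ω = 1} * log (1 - c) := by
    rw [setIntegral_congr_ae₀ (g := fun _ ↦ log (1 - c)) hS, setIntegral_const, smul_eq_mul]
    filter_upwards with ω (hω : X ω = 1)
    rw [hω, mul_one]
  have hoff : ∫ ω in {ω | X ω = 1}ᶜ, log (1 - c * X ω) ∂P ≤ ∫ ω, log⁺ (1 - X ω) ∂P :=
    calc ∫ ω in {ω | X ω = 1}ᶜ, log (1 - c * X ω) ∂P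
      _ ≤ ∫ ω in {ω | X ω = 1}ᶜ, log⁺ (1 - X ω) ∂P :=
        setIntegral_mono_ae hlog.integrableOn hint.integrableOn
          (hX1.mono fun _ hω ↦ (log_one_sub_mul_mem_Icc hc0 hc1 hω).2)
      _ ≤ ∫ ω, log⁺ (1 - X ω) ∂P :=
        setIntegral_le_integral hint (ae_of_all _ fun _ ↦ posLog_nonneg)
  calc ∫ ω, log (1 - c * X ω) ∂P
    _ = ∫ ω in {ω | X ω = 1}, log (1 - c * X ω) ∂P +
        ∫ ω in {ω | X ω = 1}ᶜ, log (1 - c * X ω) ∂P := (integral_add_compl₀ hS hlog).symm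
    _ ≤ P.real {ω | X ω = 1} * log (1 - c) + ∫ ω, log⁺ (1 - X ω) ∂P := add_le_add hon.le hoff

lemma tendsto_integral_log_one_sub_mul_atBot [IsFiniteMeasure P] (hX : AEMeasurable X P)
    (hX1 : ∀ᵐ ω ∂P, X ω ≤ 1) (hint : Integrable (fun ω ↦ log⁺ (1 - X ω)) P)
    (hpos : 0 < P {ω | X ω = 1}) :
    Tendsto (fun c ↦ ∫ ω, log (1 - c * X ω) ∂P) (𝓝[<] 1) atBot := by
  have hreal : 0 < P.real {ω | X ω = 1} := ENNReal.toReal_pos hpos.ne' (measure_ne_top _ _)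
  refine tendsto_atBot_mono' _ ?_ (tendsto_atBot_add_const_right _ (∫ ω, log⁺ (1 - X ω) ∂P)
    (tendsto_log_one_sub_nhdsLT_one.const_mul_atBot hreal))
  filter_upwards [Ico_mem_nhdsLT zero_lt_one] with c hc
  exact integral_log_one_sub_mul_le hX hX1 hint hc.1 hc.2

lemma integrable_posLog_one_sub_div [IsFiniteMeasure P] (haμ : a ≤ μ) (hμb : μ < b)
    (hX : AEMeasurable X P) (hXmem : ∀ᵐ ω ∂P, X ω ∈ Set.Icc a b) :
    Integrable (fun ω ↦ log⁺ (1 - (X ω - μ) / (b - μ))) P :=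
  .of_mem_Icc 0 (log (1 - (a - μ) / (b - μ)))
    (continuous_posLog.measurable.comp_aemeasurable (((hX.sub_const μ).div_const _).const_sub 1))
    (hXmem.mono fun _ hω ↦ ⟨posLog_nonneg, posLog_one_sub_div_le_log haμ hμb hω⟩)

lemma integral_posLog_one_sub_div_le [IsProbabilityMeasure P] (haμ : a ≤ μ) (hμb : μ < b)
    (hX : AEMeasurable X P) (hXmem : ∀ᵐ ω ∂P, X ω ∈ Set.Icc a b) :
    ∫ ω, log⁺ (1 - (X ω - μ) / (b - μ)) ∂P ≤ log (1 - (a - μ) / (b - μ)) :=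
  calc ∫ ω, log⁺ (1 - (X ω - μ) / (b - μ)) ∂P
    _ ≤ ∫ _, log (1 - (a - μ) / (b - μ)) ∂P :=
      integral_mono_ae (integrable_posLog_one_sub_div haμ hμb hX hXmem) (integrable_const _)
        (hXmem.mono fun _ ↦ posLog_one_sub_div_le_log haμ hμb)
    _ = log (1 - (a - μ) / (b - μ)) := by rw [integral_const, probReal_univ, one_smul]

end Expectation

theorem stmt12_general {Ω : Type*} [MeasurableSpace Ω] (P : Measure Ω) [IsFiniteMeasure P]
    (τ1 μ : ℝ) (hμ1 : μ < τ1) (T : Ω → ℝ) (hTmeas : AEMeasurable T P)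
    (hTint : Integrable (fun ω ↦ log⁺ (1 - (T ω - μ) / (τ1 - μ))) P)
    (hTle : ∀ᵐ ω ∂P, T ω ≤ τ1) (hpos : 0 < P {ω | T ω = τ1}) (lam : ℝ → ℝ)
    (hlam : ∀ c, lam c = ∫ ω, log (1 - c * (T ω - μ) / (τ1 - μ)) ∂P) :
    (∀ c, 0 ≤ c → c < 1 → lam c ≤
      P.real {ω | T ω = τ1} * log (1 - c) + ∫ ω, log⁺ (1 - (T ω - μ) / (τ1 - μ)) ∂P) ∧
      Tendsto lam (𝓝[<] 1) atBot := by
  have hd : 0 < τ1 - μ := sub_pos.2 hμ1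
  have hX : AEMeasurable (fun ω ↦ (T ω - μ) / (τ1 - μ)) P := (hTmeas.sub_const μ).div_const _
  have hX1 : ∀ᵐ ω ∂P, (T ω - μ) / (τ1 - μ) ≤ 1 :=
    hTle.mono fun _ hω ↦ (div_le_one hd).2 (sub_le_sub_right hω μ)
  have hevent : {ω | T ω = τ1} = {ω | (T ω - μ) / (τ1 - μ) = 1} := by
    simp only [div_eq_one_iff_eq hd.ne', sub_left_inj]
  simp only [funext hlam, mul_div_assoc]
  rw [hevent] at hpos ⊢
  exact ⟨fun c ↦ integral_log_one_sub_mul_le hX hX1 hTint,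
    tendsto_integral_log_one_sub_mul_atBot hX hX1 hTint hpos⟩

/-- part of Lemma 4: if `τ0 ≤ T ≤ τ1` a.s., `τ0 < μ < τ1` and
`P{T = τ1} > 0`, then `λ(c) ≤ P{T = τ1}·log(1 − c) + log(1 − (τ0 − μ)/(τ1 − μ))` for
`0 ≤ c < 1`, and `λ(c) → −∞` as `c ↑ 1`. -/
theorem stmt12 {Ω : Type*} [MeasurableSpace Ω] (P : Measure Ω) [IsProbabilityMeasure P]
    (τ0 τ1 μ : ℝ) (h0μ : τ0 < μ) (hμ1 : μ < τ1)
    (T : Ω → ℝ) (hTmeas : Measurable T) (hTint : Integrable T P)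
    (hTbd : ∀ᵐ ω ∂P, T ω ∈ Set.Icc τ0 τ1)
    (hpos : 0 < P {ω | T ω = τ1})
    (lam : ℝ → ℝ)
    (hlam : ∀ c, lam c = ∫ ω, Real.log (1 - c * (T ω - μ) / (τ1 - μ)) ∂P) :
    (∀ c, 0 ≤ c → c < 1 →
        lam c ≤ (P {ω | T ω = τ1}).toReal * Real.log (1 - c) +
          Real.log (1 - (τ0 - μ) / (τ1 - μ))) ∧
      Tendsto lam (nhdsWithin 1 (Set.Iio 1)) atBot := by
  obtain ⟨hle, hlim⟩ := stmt12_general P τ1 μ hμ1 T hTmeas.aemeasurable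
    (integrable_posLog_one_sub_div h0μ.le hμ1 hTmeas.aemeasurable hTbd)
    (hTbd.mono fun _ ↦ And.right) hpos lam hlam
  exact ⟨fun c hc0 hc1 ↦ (hle c hc0 hc1).trans (add_le_add_right
    (integral_posLog_one_sub_div_le h0μ.le hμ1 hTmeas.aemeasurable hTbd) _), hlim⟩
end

section
/- Let T be an integrable random variable with T ≤ τ1 almost surely and p = E(T) < τ1, let {𝓕_k}_{k=0}^∞ be a filtration, let 0 < α < 1, and suppose that for each μ < τ1 a process {M_k^μ}_{k=0}^∞ adapted to {𝓕_k} is given such that: (i) for every k and every sample point, the map μ ↦ M_k^μ is continuous and increasing; and (ii) the process {M_k^p}_k (at μ = p = E(T)) is a positive supermartingale with E(M_0^p) ≤ 1. Define, for each k, the random variable U_k^r = inf{μ : M_k^μ ≥ 1/α} (with U_k^r = ∞ if M_k^μ < 1/α for all μ). Then P{∀ k : E(T) < U_k^r} ≥ 1 − α; that is, each U_k^r is a (1 − α)-confidence upper bound for E(T), simultaneously over all k. -/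
open MeasureTheory ProbabilityTheory Filter

/-!
By monotonicity and right continuity of `μ ↦ M_k^μ`, the bound `U_k` can only fail to exceed `p`
when `M_k^p ≥ 1/α`: if `M_k^p < 1/α`, then `M_k^q < 1/α` for some `q > p`, so `p < q ≤ U_k`. Hence
the bounds fail for some `k` only if the nonnegative supermartingale `M^p` ever reaches the level
`1/α`. Ville's inequality, obtained by optional stopping at the first time the level is reached
followed by Markov's inequality, bounds the probability of this by `α E(M_0^p) ≤ α`.
-/

open scoped Topology

section StoppedValue

variable {ι Ω β : Type*}

lemma ae_nonneg_stoppedValue [Nonempty ι] [Countable ι] [Zero β] [LE β] {m0 : MeasurableSpace Ω}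
    {P : Measure Ω} {u : ι → Ω → β} (hu : ∀ i, 0 ≤ᵐ[P] u i) (τ : Ω → WithTop ι) :
    0 ≤ᵐ[P] stoppedValue u τ := by
  filter_upwards [ae_all_iff.2 hu] with ω hω using hω _

lemma stoppedValue_hittingBtwn_mem_iff [ConditionallyCompleteLinearOrder ι] [WellFoundedLT ι]
    {u : ι → Ω → β} {s : Set β} {n m : ι} (hnm : n ≤ m) {ω : Ω} :
    haveI : Nonempty ι := ⟨n⟩
    stoppedValue u (fun ω ↦ ((hittingBtwn u s n m ω : ι) : WithTop ι)) ω ∈ s ↔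
      ∃ j ∈ Set.Icc n m, u j ω ∈ s :=
  ⟨fun h ↦ ⟨_, hittingBtwn_mem_Icc hnm ω, h⟩, stoppedValue_hittingBtwn_mem⟩

end StoppedValue

section Ville

variable {Ω : Type*} {m0 : MeasurableSpace Ω} {P : Measure Ω} {ℱ : Filtration ℕ m0}

lemma supermartingale_expected_stoppedValue_anti {E : Type*} [NormedAddCommGroup E]
    [NormedSpace ℝ E] [CompleteSpace E] [PartialOrder E] [IsOrderedAddMonoid E]
    [IsOrderedModule ℝ E] [ClosedIciTopology E] [SigmaFiniteFiltration P ℱ] {X : ℕ → Ω → E}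
    (hX : Supermartingale X ℱ P) {τ π : Ω → ℕ∞} (hτ : IsStoppingTime ℱ τ)
    (hπ : IsStoppingTime ℱ π) (hle : τ ≤ π) {N : ℕ} (hbdd : ∀ ω, π ω ≤ N) :
    P[stoppedValue X π] ≤ P[stoppedValue X τ] := by
  have hneg : P[-stoppedValue X τ] ≤ P[-stoppedValue X π] :=
    hX.neg.expected_stoppedValue_mono hτ hπ hle hbdd
  rwa [integral_neg', integral_neg', neg_le_neg_iff] at hneg

variable {X : ℕ → Ω → ℝ}

lemma supermartingale_maximal_ineq [IsFiniteMeasure P] (hX : Supermartingale X ℱ P)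
    (hnonneg : ∀ k, 0 ≤ᵐ[P] X k) (c : ℝ) (n : ℕ) :
    c * P.real {ω | ∃ k ≤ n, c ≤ X k ω} ≤ P[X 0] := by
  set τ : Ω → ℕ∞ := fun ω ↦ (hittingBtwn X (Set.Ici c) 0 n ω : ℕ)
  have hτ : IsStoppingTime ℱ τ :=
    hX.stronglyAdapted.adapted.isStoppingTime_hittingBtwn measurableSet_Ici
  have hτ_le : ∀ ω, τ ω ≤ n := fun ω ↦ Nat.cast_le.2 (hittingBtwn_le ω)
  have hcross : {ω | ∃ k ≤ n, c ≤ X k ω} = {ω | c ≤ stoppedValue X τ ω} := by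
    ext ω
    simpa using! (stoppedValue_hittingBtwn_mem_iff (u := X) (s := Set.Ici c) n.zero_le).symm
  calc c * P.real {ω | ∃ k ≤ n, c ≤ X k ω}
    _ = c * P.real {ω | c ≤ stoppedValue X τ ω} := by rw [hcross]
    _ ≤ P[stoppedValue X τ] :=
        mul_meas_ge_le_integral_of_nonneg (ae_nonneg_stoppedValue hnonneg τ)
          (integrable_stoppedValue ℕ hτ hX.integrable hτ_le) c
    _ ≤ P[X 0] :=
        supermartingale_expected_stoppedValue_anti hX (isStoppingTime_const ℱ 0) hτ
          (fun _ ↦ zero_le) hτ_le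

theorem ville_ineq [IsFiniteMeasure P] (hX : Supermartingale X ℱ P)
    (hnonneg : ∀ k, 0 ≤ᵐ[P] X k) (c : ℝ) :
    c * P.real {ω | ∃ k, c ≤ X k ω} ≤ P[X 0] := by
  have hlim : Tendsto (fun n ↦ P.real {ω | ∃ k ≤ n, c ≤ X k ω}) atTop
      (𝓝 (P.real {ω | ∃ k, c ≤ X k ω})) := by
    have h := tendsto_measure_iUnion_accumulate (μ := P) (f := fun k ↦ {ω | c ≤ X k ω})
    simp only [Set.accumulate_def, ← Set.ofPred_exists, exists_prop] at h
    exact (ENNReal.tendsto_toReal (measure_ne_top P _)).comp h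
  exact le_of_tendsto' (hlim.const_mul c) (supermartingale_maximal_ineq hX hnonneg c)

theorem ofReal_one_sub_le_measure_forall_lt_one_div [IsProbabilityMeasure P]
    (hX : Supermartingale X ℱ P) (hnonneg : ∀ k, 0 ≤ᵐ[P] X k) (hinit : P[X 0] ≤ 1)
    {α : ℝ} (hα : 0 < α) :
    ENNReal.ofReal (1 - α) ≤ P {ω | ∀ k, X k ω < 1 / α} := by
  have hcross : P {ω | ∃ k, 1 / α ≤ X k ω} ≤ ENNReal.ofReal α := by
    have h := (ville_ineq hX hnonneg (1 / α)).trans hinit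
    rw [one_div_mul_eq_div, div_le_one hα] at h
    rw [← ofReal_measureReal]
    exact ENNReal.ofReal_le_ofReal h
  have hcompl : {ω | ∃ k, 1 / α ≤ X k ω}ᶜ = {ω | ∀ k, X k ω < 1 / α} := by
    ext ω
    simp only [Set.mem_compl_iff, Set.mem_ofPred_eq, not_exists, not_le]
  rw [ENNReal.ofReal_sub _ hα.le, ENNReal.ofReal_one, tsub_le_iff_left, ← hcompl]
  calc 1 = P Set.univ := measure_univ.symm
    _ ≤ P {ω | ∃ k, 1 / α ≤ X k ω} + P {ω | ∃ k, 1 / α ≤ X k ω}ᶜ :=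
        measure_univ_le_add_compl _
    _ ≤ ENNReal.ofReal α + P {ω | ∃ k, 1 / α ≤ X k ω}ᶜ := by gcongr

end Ville

lemma coe_lt_sInf_superlevel_of_monotoneOn {β : Type*} [LinearOrder β] [TopologicalSpace β]
    [ClosedIciTopology β] {f : ℝ → β} {s : Set ℝ} {a : ℝ} {c : β} (hmono : MonotoneOn f s)
    (hs : s ∈ 𝓝[>] a) (hcont : ContinuousWithinAt f (Set.Ioi a) a) (hlt : f a < c) :
    (a : EReal) < sInf {x : EReal | ∃ μ : ℝ, μ ∈ s ∧ x = (μ : EReal) ∧ c ≤ f μ} := by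
  obtain ⟨q, ⟨hqc, hqs⟩, haq⟩ : ∃ q, (f q < c ∧ q ∈ s) ∧ a < q :=
    (((hcont.eventually_lt_const hlt).and hs).and self_mem_nhdsWithin).exists
  refine (EReal.coe_lt_coe_iff.2 haq).trans_le (le_sInf ?_)
  rintro _ ⟨μ, hμs, rfl, hμc⟩
  exact EReal.coe_le_coe_iff.2 (hmono.reflect_lt hqs hμs (hqc.trans_le hμc)).le

theorem stmt16_general {Ω : Type*} {m0 : MeasurableSpace Ω} (P : Measure Ω)
    [IsProbabilityMeasure P] (ℱ : Filtration ℕ m0) {α p : ℝ} (hα : 0 < α)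
    {S : Set ℝ} (hS : S ∈ 𝓝[>] p) (M : ℝ → ℕ → Ω → ℝ)
    (hnonneg : ∀ k, 0 ≤ᵐ[P] M p k)
    (hmono : ∀ k ω, MonotoneOn (fun μ ↦ M μ k ω) S)
    (hcont : ∀ k ω, ContinuousWithinAt (fun μ ↦ M μ k ω) (Set.Ioi p) p)
    (hsuper : Supermartingale (M p) ℱ P) (hinit : ∫ ω, M p 0 ω ∂P ≤ 1)
    (U : ℕ → Ω → EReal)
    (hU : ∀ k ω, U k ω =
      sInf {x : EReal | ∃ μ : ℝ, μ ∈ S ∧ x = (μ : EReal) ∧ 1 / α ≤ M μ k ω}) :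
    ENNReal.ofReal (1 - α) ≤ P {ω | ∀ k, (p : EReal) < U k ω} := by
  refine (ofReal_one_sub_le_measure_forall_lt_one_div hsuper hnonneg hinit hα).trans
    (measure_mono fun ω hω k ↦ ?_)
  rw [hU]
  exact coe_lt_sInf_superlevel_of_monotoneOn (hmono k ω) hS (hcont k ω) (hω k)

/-- Theorem 4, confidence upper bounds: given a suitable family
`{M_k^μ}_{k,μ<τ1}` of processes adapted to a filtration `𝓕`, nonnegative and integrable,
with `μ ↦ M_k^μ` continuous and monotone increasing on `(−∞, τ1)` pointwise, and such
that at `p = E(T) < τ1` the process `{M_k^p}` is a positive supermartingale with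
`E(M_0^p) ≤ 1`, the statistics `U_k^r = inf{μ < τ1 : M_k^μ ≥ 1/α}` (`= +∞` if there is
no such `μ`) satisfy `P{∀ k : E(T) < U_k^r} ≥ 1 − α`. -/
theorem stmt16 {Ω : Type*} {m0 : MeasurableSpace Ω} (P : Measure Ω) [IsProbabilityMeasure P]
    (ℱ : Filtration ℕ m0)
    (τ1 α : ℝ) (hα0 : 0 < α) (hα1 : α < 1)
    (T : Ω → ℝ) (hTint : Integrable T P) (hTbd : ∀ᵐ ω ∂P, T ω ≤ τ1)
    (p : ℝ) (hp : p = ∫ ω, T ω ∂P) (hpτ : p < τ1)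
    (M : ℝ → ℕ → Ω → ℝ)
    (hadapted : ∀ μ < τ1, Adapted ℱ (M μ))
    (hint : ∀ μ < τ1, ∀ k, Integrable (M μ k) P)
    (hnonneg : ∀ μ < τ1, ∀ k, 0 ≤ᵐ[P] M μ k)
    (hmono : ∀ k ω, MonotoneOn (fun μ => M μ k ω) (Set.Iio τ1))
    (hcont : ∀ k ω, ContinuousOn (fun μ => M μ k ω) (Set.Iio τ1))
    (hsuper : Supermartingale (M p) ℱ P)
    (hinit : ∫ ω, M p 0 ω ∂P ≤ 1)
    (U : ℕ → Ω → EReal)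
    (hU : ∀ k ω, U k ω =
      sInf {x : EReal | ∃ μ : ℝ, μ < τ1 ∧ x = (μ : EReal) ∧ 1 / α ≤ M μ k ω}) :
    ENNReal.ofReal (1 - α) ≤ P {ω | ∀ k, (p : EReal) < U k ω} :=
  stmt16_general P ℱ hα0 (mem_nhdsWithin_of_mem_nhds (Iio_mem_nhds hpτ)) M (hnonneg p hpτ)
    hmono (fun k ω ↦ ((hcont k ω).continuousAt (Iio_mem_nhds hpτ)).continuousWithinAt) hsuper
    hinit U hU
end

section
/- Let τ1, μ ∈ ℝ with μ < τ1, let 0 ≤ c < 1, and let t_1, …, t_n be real numbers with t_i ≤ τ1 for each i. If ∏_{i=1}^n (1 − c·(t_i − μ)/(τ1 − μ)) > 1 and c > 0, then the sample mean satisfies (1/n)·Σ_{i=1}^n t_i < μ. In particular, whenever a test martingale value M_n^μ(c) exceeds 1, the sample mean lies strictly below μ. -/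
open Finset

/-! Put `r = c / (τ1 - μ)`. The factors `1 - r * (t i - μ)` are nonnegative, so the inequality
`1 - x ≤ exp (-x)` can be multiplied over `i`, bounding the martingale value by
`exp (-r * ∑ i, (t i - μ))`. A value above `1` thus forces the deviations from `μ` to have
a negative sum. -/

section OrderedField

variable {ι K : Type*} [Field K] [LinearOrder K] [IsStrictOrderedRing K]

lemma div_mul_le_one {a c d : K} (hc0 : 0 ≤ c) (hc1 : c ≤ 1) (hd : 0 ≤ d) (had : a ≤ d) :
    c / d * a ≤ 1 := by
  rw [div_mul_eq_mul_div]
  refine div_le_one_of_le₀ ?_ hd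
  calc
    c * a ≤ c * d := mul_le_mul_of_nonneg_left had hc0
    _ ≤ d := mul_le_of_le_one_left hd hc1

lemma sum_div_card_lt_of_sum_sub_neg {s : Finset ι} {t : ι → K} {μ : K}
    (h : ∑ i ∈ s, (t i - μ) < 0) : (∑ i ∈ s, t i) / #s < μ := by
  have hs : s.Nonempty := nonempty_of_sum_ne_zero h.ne
  have hcard : (0 : K) < #s := Nat.cast_pos.mpr hs.card_pos
  rw [sum_sub_distrib, sum_const, nsmul_eq_mul, sub_neg] at h
  rwa [div_lt_iff₀' hcard]

end OrderedField

section Real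

variable {ι : Type*} {s : Finset ι}

lemma prod_one_sub_le_exp_neg_sum {x : ι → ℝ} (hx : ∀ i ∈ s, x i ≤ 1) :
    ∏ i ∈ s, (1 - x i) ≤ Real.exp (-∑ i ∈ s, x i) := by
  rw [← sum_neg_distrib, Real.exp_sum]
  exact prod_le_prod (fun i hi ↦ sub_nonneg.mpr (hx i hi)) fun i _ ↦ Real.one_sub_le_exp_neg (x i)

lemma sum_neg_of_one_lt_prod_one_sub {x : ι → ℝ} (hx : ∀ i ∈ s, x i ≤ 1)
    (hprod : 1 < ∏ i ∈ s, (1 - x i)) : ∑ i ∈ s, x i < 0 :=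
  neg_pos.mp (Real.one_lt_exp_iff.mp (hprod.trans_le (prod_one_sub_le_exp_neg_sum hx)))

theorem stmt17_general {t : ι → ℝ} {μ r : ℝ} (hr : 0 ≤ r) (ht : ∀ i ∈ s, r * (t i - μ) ≤ 1)
    (hM : 1 < ∏ i ∈ s, (1 - r * (t i - μ))) : (∑ i ∈ s, t i) / #s < μ := by
  have hsum : r * ∑ i ∈ s, (t i - μ) < 0 := by
    rw [mul_sum]
    exact sum_neg_of_one_lt_prod_one_sub ht hM
  exact sum_div_card_lt_of_sum_sub_neg (neg_of_mul_neg_right hsum hr)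

end Real

/-- Remark 7: if `μ < τ1`, `0 < c < 1`, `t_i ≤ τ1` for all `i`, and the
test martingale value `M_n^μ(c) = ∏_{i=1}^n (1 − c·(t_i − μ)/(τ1 − μ))` exceeds `1`,
then the sample mean satisfies `(1/n)·Σ t_i < μ`. -/
theorem stmt17 (τ1 μ : ℝ) (hμτ : μ < τ1) (c : ℝ) (hc0 : 0 < c) (hc1 : c < 1)
    (n : ℕ) (t : Fin n → ℝ) (ht : ∀ i, t i ≤ τ1)
    (hM : 1 < ∏ i, (1 - c * (t i - μ) / (τ1 - μ))) :
    (∑ i, t i) / n < μ := by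
  simp only [mul_div_right_comm c] at hM
  simpa only [card_fin] using stmt17_general (div_pos hc0 (sub_pos.mpr hμτ)).le
    (fun i _ ↦ div_mul_le_one hc0.le hc1.le (sub_pos.mpr hμτ).le (sub_le_sub_right (ht i) μ)) hM
end

section
/- Let τ0 < τ1, let t_1, …, t_n ∈ [τ0, τ1], and let 0 ≤ c ≤ 1. Then the function μ ↦ M_n^{μ,+}(c) = ∏_{i=1}^n (1 − c·(t_i − μ)/(τ1 − μ)) is convex and monotone increasing on (−∞, τ1), and the function μ ↦ M_n^{μ,−}(c) = ∏_{i=1}^n (1 − c·(μ − t_i)/(μ − τ0)) is convex and monotone decreasing on (τ0, ∞). -/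
open Finset

/-! With `u = τ1 - μ`, respectively `u = μ - τ0`, both products take the form
`∏ i, ((1 - c) + b i / u)` with `b i ≥ 0`. Each factor is nonnegative, convex and antitone in
`u > 0`, and nonnegative convex functions that vary in the same direction have a convex product.
Since `u` is an affine function of `μ`, decreasing in the first case and increasing in the second,
convexity and monotonicity carry over to `μ`. -/

theorem monovaryOn_finsetProd_right {ι α β R : Type*} [CommMonoidWithZero R] [LinearOrder R]
    [ZeroLEOneClass R] [PosMulMono R] [Preorder β] {S : Finset ι} {s : Set α} {f : α → β}
    {g : ι → α → R} (hfg : ∀ i ∈ S, MonovaryOn f (g i) s) (hg₀ : ∀ i ∈ S, ∀ x ∈ s, 0 ≤ g i x) :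
    MonovaryOn f (fun x => ∏ i ∈ S, g i x) s := by
  intro x hx y hy hlt
  obtain ⟨i, hi, hi_lt⟩ : ∃ i ∈ S, g i x < g i y := by
    by_contra! hle
    exact hlt.not_ge (prod_le_prod (fun i hi => hg₀ i hi y hy) hle)
  exact hfg i hi hx hy hi_lt

theorem convexOn_finsetProd {ι 𝕜 E R : Type*} [CommRing 𝕜] [LinearOrder 𝕜]
    [IsStrictOrderedRing 𝕜] [CommRing R] [LinearOrder R] [IsStrictOrderedRing R]
    [AddCommGroup E] [Module 𝕜 E] [Module 𝕜 R] [IsOrderedModule 𝕜 R] [IsScalarTower 𝕜 R R]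
    [SMulCommClass 𝕜 R R] {S : Finset ι} {s : Set E} {f : ι → E → R} (hs : Convex 𝕜 s)
    (hf : ∀ i ∈ S, ConvexOn 𝕜 s (f i)) (hf₀ : ∀ i ∈ S, ∀ x ∈ s, 0 ≤ f i x)
    (hmono : (S : Set ι).Pairwise fun i j => MonovaryOn (f i) (f j) s) :
    ConvexOn 𝕜 s fun x => ∏ i ∈ S, f i x := by
  induction S using Finset.cons_induction with
  | empty => simpa only [prod_empty] using convexOn_const 1 hs
  | cons j S hj ih =>
    simp only [forall_mem_cons] at hf hf₀
    rw [coe_cons, Set.pairwise_insert_of_notMem (mem_coe.not.mpr hj)] at hmono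
    simp only [prod_cons]
    exact hf.1.mul (ih hf.2 hf₀.2 hmono.1) hf₀.1
      (fun x hx => prod_nonneg fun i hi => hf₀.2 i hi x hx)
      (monovaryOn_finsetProd_right (fun i hi => (hmono.2 i hi).1) hf₀.2)

theorem one_sub_mul_div_eq {K : Type*} [Field K] (c v : K) {u : K} (hu : u ≠ 0) :
    1 - c * v / u = (1 - c) + c * (u - v) / u := by
  field_simp
  ring

section OrderedField

variable {ι K : Type*} [Field K] [LinearOrder K] [IsStrictOrderedRing K] {S : Finset ι}

theorem convexOn_const_add_div (a : K) {b : K} (hb : 0 ≤ b) :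
    ConvexOn K (Set.Ioi 0) fun u => a + b / u := by
  have hinv : ConvexOn K (Set.Ioi 0) fun u : K => u⁻¹ := by
    simpa only [zpow_neg_one] using convexOn_zpow (𝕜 := K) (-1)
  simpa only [div_eq_mul_inv, smul_eq_mul, Pi.add_def] using
    (convexOn_const a (convex_Ioi 0)).add (hinv.smul hb)

theorem antitoneOn_const_add_div (a : K) {b : K} (hb : 0 ≤ b) :
    AntitoneOn (fun u => a + b / u) (Set.Ioi 0) :=
  fun _ hu _ _ huv => add_le_add_right (div_le_div_of_nonneg_left hb hu huv) a

section

variable {a b : ι → K} (ha : ∀ i ∈ S, 0 ≤ a i) (hb : ∀ i ∈ S, 0 ≤ b i)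
include ha hb

theorem const_add_div_nonneg : ∀ i ∈ S, ∀ u ∈ Set.Ioi (0 : K), 0 ≤ a i + b i / u :=
  fun i hi _ hu => add_nonneg (ha i hi) (div_nonneg (hb i hi) (le_of_lt hu))

theorem convexOn_prod_const_add_div :
    ConvexOn K (Set.Ioi 0) fun u => ∏ i ∈ S, (a i + b i / u) :=
  convexOn_finsetProd (convex_Ioi 0) (fun i hi => convexOn_const_add_div (a i) (hb i hi))
    (const_add_div_nonneg ha hb) fun i hi j hj _ =>
      (antitoneOn_const_add_div (a i) (hb i hi)).monovaryOn
        (antitoneOn_const_add_div (a j) (hb j hj))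

theorem antitoneOn_prod_const_add_div :
    AntitoneOn (fun u => ∏ i ∈ S, (a i + b i / u)) (Set.Ioi 0) :=
  AntitoneOn.finsetProd (fun i hi => antitoneOn_const_add_div (a i) (hb i hi))
    (const_add_div_nonneg ha hb)

end

section

variable (S) (t : ι → K) (c τ : K)

theorem eqOn_prod_one_sub_mul_div_Iio :
    Set.EqOn (fun μ => ∏ i ∈ S, ((1 - c) + c * (τ - t i) / (τ - μ)))
      (fun μ => ∏ i ∈ S, (1 - c * (t i - μ) / (τ - μ))) (Set.Iio τ) := fun μ hμ =>
  prod_congr rfl fun i _ => by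
    rw [one_sub_mul_div_eq c _ (sub_pos.2 hμ).ne', sub_sub_sub_cancel_right]

theorem eqOn_prod_one_sub_mul_div_Ioi :
    Set.EqOn (fun μ => ∏ i ∈ S, ((1 - c) + c * (t i - τ) / (μ - τ)))
      (fun μ => ∏ i ∈ S, (1 - c * (μ - t i) / (μ - τ))) (Set.Ioi τ) := fun μ hμ =>
  prod_congr rfl fun i _ => by
    rw [one_sub_mul_div_eq c _ (sub_pos.2 hμ).ne', sub_sub_sub_cancel_left]

end

variable {t : ι → K} {c τ : K}

theorem convexOn_prod_one_sub_mul_div_Iio (ht : ∀ i ∈ S, t i ≤ τ) (hc : c ∈ Set.Icc 0 1) :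
    ConvexOn K (Set.Iio τ) fun μ => ∏ i ∈ S, (1 - c * (t i - μ) / (τ - μ)) := by
  have hconv := (convexOn_prod_const_add_div (fun _ _ => sub_nonneg.2 hc.2)
    fun i hi => mul_nonneg hc.1 (sub_nonneg.2 (ht i hi))).comp_affineMap
      (AffineEquiv.constVSub K τ).toAffineMap
  have hpre : (AffineEquiv.constVSub K τ).toAffineMap ⁻¹' Set.Ioi 0 = Set.Iio τ :=
    Set.ext fun _ => sub_pos
  rw [hpre] at hconv
  exact hconv.congr (eqOn_prod_one_sub_mul_div_Iio S t c τ)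

theorem monotoneOn_prod_one_sub_mul_div_Iio (ht : ∀ i ∈ S, t i ≤ τ) (hc : c ∈ Set.Icc 0 1) :
    MonotoneOn (fun μ => ∏ i ∈ S, (1 - c * (t i - μ) / (τ - μ))) (Set.Iio τ) := by
  have hanti := antitoneOn_prod_const_add_div (fun _ _ => sub_nonneg.2 hc.2)
    fun i hi => mul_nonneg hc.1 (sub_nonneg.2 (ht i hi))
  exact MonotoneOn.congr (fun μ hμ ν hν hμν =>
    hanti (sub_pos.2 hν) (sub_pos.2 hμ) (sub_le_sub_left hμν τ))
    (eqOn_prod_one_sub_mul_div_Iio S t c τ)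

theorem convexOn_prod_one_sub_mul_div_Ioi (ht : ∀ i ∈ S, τ ≤ t i) (hc : c ∈ Set.Icc 0 1) :
    ConvexOn K (Set.Ioi τ) fun μ => ∏ i ∈ S, (1 - c * (μ - t i) / (μ - τ)) := by
  have hconv := (convexOn_prod_const_add_div (fun _ _ => sub_nonneg.2 hc.2)
    fun i hi => mul_nonneg hc.1 (sub_nonneg.2 (ht i hi))).comp_affineMap
      (AffineEquiv.vaddConst K τ).symm.toAffineMap
  have hpre : (AffineEquiv.vaddConst K τ).symm.toAffineMap ⁻¹' Set.Ioi 0 = Set.Ioi τ :=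
    Set.ext fun _ => sub_pos
  rw [hpre] at hconv
  exact hconv.congr (eqOn_prod_one_sub_mul_div_Ioi S t c τ)

theorem antitoneOn_prod_one_sub_mul_div_Ioi (ht : ∀ i ∈ S, τ ≤ t i) (hc : c ∈ Set.Icc 0 1) :
    AntitoneOn (fun μ => ∏ i ∈ S, (1 - c * (μ - t i) / (μ - τ))) (Set.Ioi τ) := by
  have hanti := antitoneOn_prod_const_add_div (fun _ _ => sub_nonneg.2 hc.2)
    fun i hi => mul_nonneg hc.1 (sub_nonneg.2 (ht i hi))
  exact AntitoneOn.congr (fun μ hμ ν hν hμν =>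
    hanti (sub_pos.2 hμ) (sub_pos.2 hν) (sub_le_sub_right hμν τ))
    (eqOn_prod_one_sub_mul_div_Ioi S t c τ)

theorem stmt18_general {τ0 τ1 : K} (ht : ∀ i ∈ S, t i ∈ Set.Icc τ0 τ1) (hc : c ∈ Set.Icc 0 1) :
    (ConvexOn K (Set.Iio τ1) (fun μ => ∏ i ∈ S, (1 - c * (t i - μ) / (τ1 - μ))) ∧
        MonotoneOn (fun μ => ∏ i ∈ S, (1 - c * (t i - μ) / (τ1 - μ))) (Set.Iio τ1)) ∧
      ConvexOn K (Set.Ioi τ0) (fun μ => ∏ i ∈ S, (1 - c * (μ - t i) / (μ - τ0))) ∧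
        AntitoneOn (fun μ => ∏ i ∈ S, (1 - c * (μ - t i) / (μ - τ0))) (Set.Ioi τ0) :=
  have hle : ∀ i ∈ S, t i ≤ τ1 := fun i hi => (ht i hi).2
  have hge : ∀ i ∈ S, τ0 ≤ t i := fun i hi => (ht i hi).1
  ⟨⟨convexOn_prod_one_sub_mul_div_Iio hle hc, monotoneOn_prod_one_sub_mul_div_Iio hle hc⟩,
    convexOn_prod_one_sub_mul_div_Ioi hge hc, antitoneOn_prod_one_sub_mul_div_Ioi hge hc⟩

end OrderedField

/-- Lemma 5, convexity in `μ`: for `τ0 < τ1`, `t_i ∈ [τ0, τ1]` and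
`0 ≤ c ≤ 1`, the map `μ ↦ M_n^{μ,+}(c) = ∏_{i=1}^n (1 − c·(t_i − μ)/(τ1 − μ))` is convex
and monotone increasing on `(−∞, τ1)`, and the map
`μ ↦ M_n^{μ,−}(c) = ∏_{i=1}^n (1 − c·(μ − t_i)/(μ − τ0))` is convex and monotone
decreasing on `(τ0, ∞)`. -/
theorem stmt18 (τ0 τ1 : ℝ) (hττ : τ0 < τ1) (n : ℕ) (t : Fin n → ℝ)
    (ht : ∀ i, t i ∈ Set.Icc τ0 τ1) (c : ℝ) (hc : c ∈ Set.Icc (0 : ℝ) 1) :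
    (ConvexOn ℝ (Set.Iio τ1) (fun μ => ∏ i, (1 - c * (t i - μ) / (τ1 - μ))) ∧
        MonotoneOn (fun μ => ∏ i, (1 - c * (t i - μ) / (τ1 - μ))) (Set.Iio τ1)) ∧
      ConvexOn ℝ (Set.Ioi τ0) (fun μ => ∏ i, (1 - c * (μ - t i) / (μ - τ0))) ∧
        AntitoneOn (fun μ => ∏ i, (1 - c * (μ - t i) / (μ - τ0))) (Set.Ioi τ0) := by
  exact stmt18_general (fun i _ => ht i) hc
end
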